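/- For every nondegenerate point p = (x, ξ₀,…,ξ_{L−1}) ∈ C_{h⃗}, the (2,1)-entry of the gauge-transformed monodromy matrix annihilates the Baxter vector: L̃_{h⃗;21}(x, ξ₀,…,ξ_{L−1})·|p⟩ = 0 in ⊗^Lℂ^N. -/

import Mathlib

/-!
Each gauge-transformed factor `A_{ξ_j} L_{h_j}(x) A_{ξ_{j+1}}⁻¹` has `(2,1)`-entry acting on slot
`j` as `ξ_{j+1} a Y + ξ_j ξ_{j+1} x c Z - x b X - ξ_j d`, and the recursion that defines `|p_j⟩`
says exactly that this operator kills `|p_j⟩` (`factor_one_zero_mulVec`). So on the Baxter vector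
every factor is upper triangular. In the `(2,1)`-entry of the product, each term contains the
`(2,1)`-entry of some factor; since operators on distinct slots commute (`emb_commute`), it can be
moved to the right, where it annihilates the vector (`list_prod_one_zero_mulVec`).
-/

open Matrix Polynomial

noncomputable section

/-- The operator `Z` on `ℂ^N`: `(Zv)_k = ω^k v_k`. -/
def Zop (N : ℕ) (ω : ℂ) : Matrix (ZMod N) (ZMod N) ℂ :=
  Matrix.diagonal fun k => ω ^ k.val

/-- The operator `X` on `ℂ^N`: `(Xv)_k = v_{k-1}`. -/
def Xop (N : ℕ) : Matrix (ZMod N) (ZMod N) ℂ :=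
  Matrix.of fun k k' => if k' = k - 1 then 1 else 0

/-- The operator `Y := Z * X` on `ℂ^N`. -/
def Yop (N : ℕ) [NeZero N] (ω : ℂ) : Matrix (ZMod N) (ZMod N) ℂ :=
  Zop N ω * Xop N

/-- The `L`-operator `L_h(x)`, a 2×2 matrix of operators on `ℂ^N`, for
`h = (a,b,c,d) ∈ ℂ⁴`: first row `(aY, xbX)`, second row `(xcZ, d·I)`. -/
def Lop (N : ℕ) [NeZero N] (ω : ℂ) (h : ℂ × ℂ × ℂ × ℂ) (x : ℂ) :
    Matrix (Fin 2) (Fin 2) (Matrix (ZMod N) (ZMod N) ℂ) :=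
  Matrix.of
    ![![h.1 • Yop N ω, (x * h.2.1) • Xop N],
      ![(x * h.2.2.1) • Zop N ω, h.2.2.2 • (1 : Matrix (ZMod N) (ZMod N) ℂ)]]

/-- Embedding of an operator on `ℂ^N` as an operator on `⊗^L ℂ^N` acting on the `j`-th
tensor slot. -/
def emb (N L : ℕ) [NeZero N] [NeZero L] (j : ZMod L) (A : Matrix (ZMod N) (ZMod N) ℂ) :
    Matrix (ZMod L → ZMod N) (ZMod L → ZMod N) ℂ :=
  Matrix.of fun k k' =>
    A (k j) (k' j) * ∏ i ∈ Finset.univ.erase j, (if k i = k' i then (1 : ℂ) else 0)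

/-- The monodromy matrix `L_{h⃗}(x) = L_{h₀}(x) ⋯ L_{h_{L-1}}(x)`, a 2×2 matrix of
operators on `⊗^L ℂ^N`, the operator entries of the `j`-th factor acting on the
`j`-th tensor slot. -/
def mono (N L : ℕ) [NeZero N] [NeZero L] (ω : ℂ) (h : ZMod L → ℂ × ℂ × ℂ × ℂ) (x : ℂ) :
    Matrix (Fin 2) (Fin 2) (Matrix (ZMod L → ZMod N) (ZMod L → ZMod N) ℂ) :=
  ((List.finRange L).map fun j =>
    (Lop N ω (h ((j : ℕ) : ZMod L)) x).map (emb N L ((j : ℕ) : ZMod L))).prod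

/-- The transfer matrix `T_{h⃗}(x)`: the trace of the monodromy matrix over the 2×2
auxiliary indices. -/
def transfer (N L : ℕ) [NeZero N] [NeZero L] (ω : ℂ) (h : ZMod L → ℂ × ℂ × ℂ × ℂ)
    (x : ℂ) : Matrix (ZMod L → ZMod N) (ZMod L → ZMod N) ℂ :=
  mono N L ω h x 0 0 + mono N L ω h x 1 1

/-- The spectral curve `C_{h⃗}`: the set of points `(x, ξ₀,…,ξ_{L−1})` with
`ξ_j^N (ξ_{j+1}^N x^N c_j^N − d_j^N) = (−1)^N (ξ_{j+1}^N a_j^N − x^N b_j^N)` for all `j`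
(cyclically). -/
def onCurve (N L : ℕ) [NeZero L] (a b c d : ZMod L → ℂ) (x : ℂ) (ξ : ZMod L → ℂ) : Prop :=
  ∀ j : ZMod L,
    ξ j ^ N * (ξ (j + 1) ^ N * x ^ N * c j ^ N - d j ^ N) =
      (-1 : ℂ) ^ N * (ξ (j + 1) ^ N * a j ^ N - x ^ N * b j ^ N)

/-- A point of the spectral curve is nondegenerate if `ξ_j ≠ 0`,
`ξ_{j+1}a_j − xb_j ≠ 0` and `ξ_{j+1}xc_jω^m − d_j ≠ 0` for all `j` and all `m ∈ ℤ/N`. -/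
def nondeg (N L : ℕ) [NeZero L] (ω : ℂ) (a b c d : ZMod L → ℂ) (x : ℂ)
    (ξ : ZMod L → ℂ) : Prop :=
  ∀ j : ZMod L, ξ j ≠ 0 ∧ ξ (j + 1) * a j - x * b j ≠ 0 ∧
    ∀ m : ZMod N, ξ (j + 1) * x * c j * ω ^ m.val - d j ≠ 0

/-- `v j` is the `j`-th local factor `|p_j⟩` of the Baxter vector at
`p = (x, ξ₀,…,ξ_{L−1})`: the vector with `⟨0|p_j⟩ = 1` and
`⟨m|p_j⟩ = ⟨m−1|p_j⟩·(ξ_{j+1}a_jω^m − xb_j)/(−ξ_j(ξ_{j+1}xc_jω^m − d_j))` for all `m`. -/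
def isBaxterFamily (N L : ℕ) [NeZero L] (ω : ℂ) (a b c d : ZMod L → ℂ) (x : ℂ)
    (ξ : ZMod L → ℂ) (v : ZMod L → ZMod N → ℂ) : Prop :=
  ∀ j : ZMod L, v j 0 = 1 ∧ ∀ m : ZMod N,
    v j m = v j (m - 1) *
      ((ξ (j + 1) * a j * ω ^ m.val - x * b j) /
        (-(ξ j) * (ξ (j + 1) * x * c j * ω ^ m.val - d j)))

/-- The Baxter vector `|p⟩ = |p₀⟩ ⊗ ⋯ ⊗ |p_{L−1}⟩ ∈ ⊗^L ℂ^N` assembled from the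
local factors `v j = |p_j⟩`. -/
def baxVec (N L : ℕ) [NeZero L] (v : ZMod L → ZMod N → ℂ) : (ZMod L → ZMod N) → ℂ :=
  fun k => ∏ j : ZMod L, v j (k j)

/-- The gauge matrix `A_ξ` with rows `(1, ξ−1)` and `(1, ξ)`. -/
def gaugeA (ξ : ℂ) : Matrix (Fin 2) (Fin 2) ℂ :=
  Matrix.of ![![1, ξ - 1], ![1, ξ]]

/-- A scalar 2×2 matrix viewed as a 2×2 matrix of operators on `⊗^L ℂ^N`. -/
def scal (N L : ℕ) [NeZero N] [NeZero L] (A : Matrix (Fin 2) (Fin 2) ℂ) :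
    Matrix (Fin 2) (Fin 2) (Matrix (ZMod L → ZMod N) (ZMod L → ZMod N) ℂ) :=
  A.map fun z => z • (1 : Matrix (ZMod L → ZMod N) (ZMod L → ZMod N) ℂ)

/-- The gauge-transformed monodromy matrix
`L̃_{h⃗}(x,ξ) = (A_{ξ₀}L_{h₀}(x)A_{ξ₁}⁻¹)⋯(A_{ξ_{L−1}}L_{h_{L−1}}(x)A_{ξ₀}⁻¹)`. -/
def gaugeMono (N L : ℕ) [NeZero N] [NeZero L] (ω : ℂ) (h : ZMod L → ℂ × ℂ × ℂ × ℂ)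
    (x : ℂ) (ξ : ZMod L → ℂ) :
    Matrix (Fin 2) (Fin 2) (Matrix (ZMod L → ZMod N) (ZMod L → ZMod N) ℂ) :=
  ((List.finRange L).map fun j =>
    scal N L (gaugeA (ξ ((j : ℕ) : ZMod L))) *
      (Lop N ω (h ((j : ℕ) : ZMod L)) x).map (emb N L ((j : ℕ) : ZMod L)) *
      scal N L (gaugeA (ξ (((j : ℕ) : ZMod L) + 1)))⁻¹).prod

/-- `Δ₋(p) = ∏_j (d_j − x ξ_{j+1} c_j)`. -/
def DeltaMinus (L : ℕ) [NeZero L] (c d : ZMod L → ℂ) (x : ℂ) (ξ : ZMod L → ℂ) : ℂ :=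
  ∏ j : ZMod L, (d j - x * ξ (j + 1) * c j)

/-- `Δ₊(p) = ∏_j ξ_j (a_j d_j − x² b_j c_j)/(ξ_{j+1} a_j − x b_j)`. -/
def DeltaPlus (L : ℕ) [NeZero L] (a b c d : ZMod L → ℂ) (x : ℂ) (ξ : ZMod L → ℂ) : ℂ :=
  ∏ j : ZMod L, ξ j * (a j * d j - x ^ 2 * b j * c j) / (ξ (j + 1) * a j - x * b j)

/-- `emb j A` acts on a function of `k` by applying `A` in the `j`-th argument only. -/
lemma emb_mulVec (N L : ℕ) [NeZero N] [NeZero L] (j : ZMod L)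
    (A : Matrix (ZMod N) (ZMod N) ℂ) (w : (ZMod L → ZMod N) → ℂ) (k : ZMod L → ZMod N) :
    (emb N L j A).mulVec w k = ∑ m, A (k j) m * w (Function.update k j m) := by
  simp only [Matrix.mulVec, dotProduct]
  symm
  apply Finset.sum_of_injOn (fun m => Function.update k j m)
  · intro m _ m' _ h
    simpa using congrFun h j
  · simp
  · intro k' _ hk'
    -- an index outside the image differs from `k` in some slot other than `j`
    have : ∃ i, i ≠ j ∧ k i ≠ k' i := by
      by_contra! hcon
      refine hk' ⟨k' j, by simp, funext fun i => ?_⟩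
      by_cases hi : i = j
      · subst hi; simp
      · simp [Function.update_of_ne hi, hcon i hi]
    obtain ⟨i, hi, hne⟩ := this
    have h0 : ∏ i ∈ Finset.univ.erase j, (if k i = k' i then (1 : ℂ) else 0) = 0 :=
      Finset.prod_eq_zero (i := i) (by simp [hi]) (by simp [hne])
    simp [emb, h0]
  · intro m _
    have h1 : ∏ i ∈ Finset.univ.erase j,
        (if k i = Function.update k j m i then (1 : ℂ) else 0) = 1 := by
      refine Finset.prod_eq_one fun i hi => ?_
      simp [Function.update_of_ne (Finset.ne_of_mem_erase hi)]
    simp [emb, h1]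

lemma emb_commute (N L : ℕ) [NeZero N] [NeZero L] {i j : ZMod L} (hij : i ≠ j)
    (A B : Matrix (ZMod N) (ZMod N) ℂ) : Commute (emb N L i A) (emb N L j B) := by
  refine Matrix.mulVec_injective (funext fun w => funext fun k => ?_)
  rw [← Matrix.mulVec_mulVec, ← Matrix.mulVec_mulVec]
  simp only [emb_mulVec, Function.update_of_ne hij, Function.update_of_ne hij.symm,
    Finset.mul_sum]
  rw [Finset.sum_comm]
  refine Finset.sum_congr rfl fun m _ => Finset.sum_congr rfl fun n _ => ?_
  rw [Function.update_comm hij.symm]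
  ring

/-- The conjugation of a slot-`j` operator by scalar matrices, entry by entry. -/
lemma scal_mul_map_emb_mul_scal (N L : ℕ) [NeZero N] [NeZero L] (j : ZMod L)
    (A B : Matrix (Fin 2) (Fin 2) ℂ)
    (T : Matrix (Fin 2) (Fin 2) (Matrix (ZMod N) (ZMod N) ℂ)) (r s : Fin 2) :
    (scal N L A * T.map (emb N L j) * scal N L B) r s =
      ∑ q, ∑ p, (B q s * A r p) • emb N L j (T p q) := by
  simp [scal, Matrix.mul_apply, Matrix.map_apply, smul_smul]

/-- If each `(2,1)`-entry in a list of `2×2` operator matrices kills `w` and commutes with all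
entries of the later factors, then the `(2,1)`-entry of the product kills `w`. -/
lemma list_prod_one_zero_mulVec {ι n : Type*} [Fintype n] [DecidableEq n]
    (T : ι → Matrix (Fin 2) (Fin 2) (Matrix n n ℂ)) (w : n → ℂ)
    (hw : ∀ i, (T i 1 0).mulVec w = 0) (l : List ι)
    (hl : l.Pairwise fun i j => ∀ r s, Commute (T i 1 0) (T j r s)) :
    ((l.map T).prod 1 0).mulVec w = 0 := by
  induction l with
  | nil => simp
  | cons i l ih =>
    rw [List.pairwise_cons] at hl
    have hcomm : ∀ l' : List ι, (∀ j ∈ l', ∀ r s, Commute (T i 1 0) (T j r s)) →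
        ∀ r s, Commute (T i 1 0) ((l'.map T).prod r s) := by
      intro l'
      induction l' with
      | nil =>
        intro _ r s
        rw [List.map_nil, List.prod_nil, Matrix.one_apply]
        split_ifs
        · exact Commute.one_right _
        · exact Commute.zero_right _
      | cons j l' ih' =>
        intro h r s
        rw [List.map_cons, List.prod_cons, Matrix.mul_apply]
        refine Commute.sum_right _ _ _ fun t _ => ?_
        exact (h j (by simp) r t).mul_right
          (ih' (fun j' hj' => h j' (List.mem_cons_of_mem _ hj')) t s)
    rw [List.map_cons, List.prod_cons, Matrix.mul_apply, Fin.sum_univ_two, Matrix.add_mulVec,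
      (hcomm l hl.1 0 0).eq, ← Matrix.mulVec_mulVec, ← Matrix.mulVec_mulVec, hw, ih hl.2]
    simp

lemma gaugeA_inv (ξ : ℂ) : (gaugeA ξ)⁻¹ = !![ξ, 1 - ξ; -1, 1] := by
  apply Matrix.inv_eq_right_inv
  ext i j
  fin_cases i <;> fin_cases j <;> simp [gaugeA, Matrix.mul_apply, Fin.sum_univ_two]

lemma baxVec_update (N L : ℕ) [NeZero L] (v : ZMod L → ZMod N → ℂ) (k : ZMod L → ZMod N)
    (j : ZMod L) (m : ZMod N) :
    baxVec N L v (Function.update k j m) = v j m * ∏ i ∈ Finset.univ.erase j, v i (k i) := by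
  rw [baxVec, ← Finset.mul_prod_erase _ _ (Finset.mem_univ j)]
  congr 1
  · simp
  · refine Finset.prod_congr rfl fun i hi => ?_
    rw [Function.update_of_ne (Finset.ne_of_mem_erase hi)]

/-- On a product vector `emb j A` acts through `A` on the `j`-th tensor factor. -/
lemma emb_mulVec_baxVec (N L : ℕ) [NeZero N] [NeZero L] (v : ZMod L → ZMod N → ℂ)
    (j : ZMod L) (A : Matrix (ZMod N) (ZMod N) ℂ) (k : ZMod L → ZMod N) :
    (emb N L j A).mulVec (baxVec N L v) k =
      A.mulVec (v j) (k j) * ∏ i ∈ Finset.univ.erase j, v i (k i) := by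
  rw [emb_mulVec]
  simp only [baxVec_update, Matrix.mulVec, dotProduct, Finset.sum_mul, mul_assoc]

lemma Xop_mulVec (N : ℕ) [NeZero N] (u : ZMod N → ℂ) (m : ZMod N) :
    (Xop N).mulVec u m = u (m - 1) := by
  simp [Xop, Matrix.mulVec, dotProduct]

lemma Zop_mulVec (N : ℕ) [NeZero N] (ω : ℂ) (u : ZMod N → ℂ) (m : ZMod N) :
    (Zop N ω).mulVec u m = ω ^ m.val * u m := by
  simp [Zop, Matrix.mulVec_diagonal]

lemma Yop_mulVec (N : ℕ) [NeZero N] (ω : ℂ) (u : ZMod N → ℂ) (m : ZMod N) :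
    (Yop N ω).mulVec u m = ω ^ m.val * u (m - 1) := by
  rw [Yop, ← Matrix.mulVec_mulVec, Zop_mulVec, Xop_mulVec]

/-- The `(2,1)`-entry of a single gauge-transformed factor annihilates the Baxter vector. -/
lemma factor_one_zero_mulVec (N L : ℕ) [NeZero N] [NeZero L] (ω : ℂ) (a b c d : ZMod L → ℂ)
    (x : ℂ) (ξ : ZMod L → ℂ) (hnd : nondeg N L ω a b c d x ξ) (v : ZMod L → ZMod N → ℂ)
    (hv : isBaxterFamily N L ω a b c d x ξ v) (j : ZMod L) :
    ((scal N L (gaugeA (ξ j)) * (Lop N ω (a j, b j, c j, d j) x).map (emb N L j) *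
      scal N L (gaugeA (ξ (j + 1)))⁻¹) 1 0).mulVec (baxVec N L v) = 0 := by
  funext k
  rw [scal_mul_map_emb_mul_scal, gaugeA_inv]
  have hrec := (hv j).2 (k j)
  obtain ⟨hξ, -, hden⟩ := hnd j
  have hden := hden (k j)
  rw [← mul_div_assoc, eq_div_iff (mul_ne_zero (neg_ne_zero.2 hξ) hden)] at hrec
  simp only [Fin.sum_univ_two, Matrix.add_mulVec, Matrix.smul_mulVec, Pi.add_apply,
    Pi.smul_apply, emb_mulVec_baxVec, smul_eq_mul]
  simp [Lop, gaugeA, Matrix.smul_mulVec, Xop_mulVec, Yop_mulVec, Zop_mulVec]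
  linear_combination -(∏ i ∈ Finset.univ.erase j, v i (k i)) * hrec

/-- at every nondegenerate point `p` of the spectral curve, the
(2,1)-entry of the gauge-transformed monodromy matrix annihilates the Baxter vector:
`L̃_{h⃗;21}(x,ξ)·|p⟩ = 0`. -/
theorem gauge_21_annihilates_baxter (M L : ℕ) [NeZero L] (hM : 1 ≤ M) (ω : ℂ)
    (hω : IsPrimitiveRoot ω (2 * M + 1)) (a b c d : ZMod L → ℂ) (x : ℂ)
    (ξ : ZMod L → ℂ) (hp : onCurve (2 * M + 1) L a b c d x ξ)
    (hnd : nondeg (2 * M + 1) L ω a b c d x ξ)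
    (v : ZMod L → ZMod (2 * M + 1) → ℂ)
    (hv : isBaxterFamily (2 * M + 1) L ω a b c d x ξ v) :
    (gaugeMono (2 * M + 1) L ω (fun j => (a j, b j, c j, d j)) x ξ 1 0).mulVec
      (baxVec (2 * M + 1) L v) = 0 := by
  unfold gaugeMono
  refine list_prod_one_zero_mulVec _ _
    (fun j => factor_one_zero_mulVec _ L ω a b c d x ξ hnd v hv _) _ ?_
  -- the index list in `gaugeMono` is `List.finRange L` coerced monadically to a list of naturals
  rw [bind_pure_comp, List.map_eq_map, List.pairwise_map]
  refine List.Pairwise.imp ?_ (List.nodup_finRange L)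
  intro i j hij r s
  have hne : ((i : ℕ) : ZMod L) ≠ ((j : ℕ) : ZMod L) := by
    intro h
    rw [ZMod.natCast_eq_natCast_iff', Nat.mod_eq_of_lt i.2, Nat.mod_eq_of_lt j.2] at h
    exact hij (Fin.ext h)
  simp only [scal_mul_map_emb_mul_scal]
  refine Commute.sum_left _ _ _ fun _ _ => Commute.sum_left _ _ _ fun _ _ =>
    Commute.sum_right _ _ _ fun _ _ => Commute.sum_right _ _ _ fun _ _ => ?_
  exact ((emb_commute _ L hne _ _).smul_left _).smul_right _

end
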